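/- Let H ∈ (0, 1/2). There exists a positive constant C, depending only on H, such that for every T > 0, ∫∫_{0<s<t<T} s^(2H−1) · min(1, (t−s)^(2H−2)) dt ds ≤ C · T^(2H). -/

import Mathlib

open MeasureTheory Real Set

/-!
The change of variables `(s, t) ↦ (s, t - s)` preserves Lebesgue measure and carries the triangle
`0 < s < t < T` into the strip `(0, T) × (0, ∞)`, where the integrand factors. The strip integral is
`(∫₀ᵀ sᵃ ds) * (∫₀^∞ min(1, uʳ) du)`, and the second factor is finite and independent of `T`.
-/

section Shear

variable {G 𝕜 : Type*} [AddGroup G] [MeasurableSpace G] [MeasurableAdd₂ G] [MeasurableNeg G]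
  [RCLike 𝕜] {μ ν : Measure G} [SFinite μ] [SFinite ν] [ν.IsAddRightInvariant]

theorem integrableOn_mul_comp_sub_preimage_prod {f g : G → 𝕜} {s t : Set G}
    (hf : IntegrableOn f s μ) (hg : IntegrableOn g t ν) :
    IntegrableOn (fun p : G × G => f p.1 * g (p.2 - p.1))
      ((fun p : G × G => (p.1, p.2 - p.1)) ⁻¹' s ×ˢ t) (μ.prod ν) := by
  have hprod : IntegrableOn (fun q : G × G => f q.1 * g q.2) (s ×ˢ t) (μ.prod ν) := by
    rw [IntegrableOn, ← Measure.prod_restrict]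
    exact hf.mul_prod hg
  exact ((measurePreserving_prod_sub μ ν).integrableOn_comp_preimage
    (MeasurableEquiv.shearSubRight G).measurableEmbedding).2 hprod

theorem setIntegral_mul_comp_sub_preimage_prod (f g : G → 𝕜) (s t : Set G) :
    ∫ p in (fun p : G × G => (p.1, p.2 - p.1)) ⁻¹' s ×ˢ t, f p.1 * g (p.2 - p.1) ∂μ.prod ν =
      (∫ x in s, f x ∂μ) * ∫ y in t, g y ∂ν := by
  rw [← setIntegral_prod_mul]
  exact (measurePreserving_prod_sub μ ν).setIntegral_preimage_emb
    (MeasurableEquiv.shearSubRight G).measurableEmbedding (fun q => f q.1 * g q.2) _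

end Shear

section Triangle

variable {f g : ℝ → ℝ} {a b : ℝ}

theorem triangle_subset_preimage_prod (a b : ℝ) :
    {p : ℝ × ℝ | a < p.1 ∧ p.1 < p.2 ∧ p.2 < b} ⊆
      (fun p : ℝ × ℝ => (p.1, p.2 - p.1)) ⁻¹' Ioo a b ×ˢ Ioi 0 :=
  fun _ ⟨ha, hlt, hb⟩ => ⟨⟨ha, hlt.trans hb⟩, sub_pos.2 hlt⟩

theorem integrableOn_triangle_mul_comp_sub (hf : IntegrableOn f (Ioo a b))
    (hg : IntegrableOn g (Ioi 0)) :
    IntegrableOn (fun p : ℝ × ℝ => f p.1 * g (p.2 - p.1))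
      {p : ℝ × ℝ | a < p.1 ∧ p.1 < p.2 ∧ p.2 < b} :=
  (integrableOn_mul_comp_sub_preimage_prod hf hg).mono_set (triangle_subset_preimage_prod a b)

theorem setIntegral_triangle_mul_comp_sub_le (hf : IntegrableOn f (Ioo a b))
    (hg : IntegrableOn g (Ioi 0)) (hf₀ : ∀ s ∈ Ioo a b, 0 ≤ f s) (hg₀ : ∀ u ∈ Ioi 0, 0 ≤ g u) :
    ∫ p in {p : ℝ × ℝ | a < p.1 ∧ p.1 < p.2 ∧ p.2 < b}, f p.1 * g (p.2 - p.1) ≤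
      (∫ s in Ioo a b, f s) * ∫ u in Ioi 0, g u := by
  have hmeas : MeasurableSet ((fun p : ℝ × ℝ => (p.1, p.2 - p.1)) ⁻¹' Ioo a b ×ˢ Ioi 0) :=
    (MeasurableEquiv.shearSubRight ℝ).measurable (measurableSet_Ioo.prod measurableSet_Ioi)
  calc ∫ p in {p : ℝ × ℝ | a < p.1 ∧ p.1 < p.2 ∧ p.2 < b}, f p.1 * g (p.2 - p.1)
      ≤ ∫ p in (fun p : ℝ × ℝ => (p.1, p.2 - p.1)) ⁻¹' Ioo a b ×ˢ Ioi 0,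
          f p.1 * g (p.2 - p.1) :=
        setIntegral_mono_set (integrableOn_mul_comp_sub_preimage_prod hf hg)
          (ae_restrict_of_forall_mem hmeas fun _ hp => mul_nonneg (hf₀ _ hp.1) (hg₀ _ hp.2))
          (triangle_subset_preimage_prod a b).eventuallyLE
    _ = (∫ s in Ioo a b, f s) * ∫ u in Ioi 0, g u :=
        setIntegral_mul_comp_sub_preimage_prod f g _ _

end Triangle

section Powers

variable {r T : ℝ}

theorem integral_Ioo_zero_rpow (hr : -1 < r) (hT : 0 ≤ T) :
    ∫ s in Ioo 0 T, s ^ r = T ^ (r + 1) / (r + 1) := by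
  rw [← integral_Ioc_eq_integral_Ioo, ← intervalIntegral.integral_of_le hT,
    integral_rpow (.inl hr), zero_rpow (by linarith), sub_zero]

theorem eqOn_Ioc_min_one_rpow_one (hr : r ≤ 0) :
    EqOn (fun u : ℝ => min 1 (u ^ r)) (fun _ => 1) (Ioc 0 1) :=
  fun _ hu => min_eq_left (one_le_rpow_of_pos_of_le_one_of_nonpos hu.1 hu.2 hr)

theorem eqOn_Ioi_min_one_rpow_rpow (hr : r ≤ 0) :
    EqOn (fun u : ℝ => min 1 (u ^ r)) (fun u => u ^ r) (Ioi 1) :=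
  fun _ hu => min_eq_right (rpow_le_one_of_one_le_of_nonpos (mem_Ioi.1 hu).le hr)

theorem integrableOn_Ioc_min_one_rpow (hr : r ≤ 0) :
    IntegrableOn (fun u : ℝ => min 1 (u ^ r)) (Ioc 0 1) :=
  (integrableOn_const (by simp)).congr_fun (eqOn_Ioc_min_one_rpow_one hr).symm measurableSet_Ioc

theorem integrableOn_Ioi_one_min_one_rpow (hr : r < -1) :
    IntegrableOn (fun u : ℝ => min 1 (u ^ r)) (Ioi 1) :=
  (integrableOn_Ioi_rpow_of_lt hr one_pos).congr_fun
    (eqOn_Ioi_min_one_rpow_rpow (by linarith)).symm measurableSet_Ioi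

theorem integrableOn_Ioi_min_one_rpow (hr : r < -1) :
    IntegrableOn (fun u : ℝ => min 1 (u ^ r)) (Ioi 0) := by
  rw [← Ioc_union_Ioi_eq_Ioi zero_le_one]
  exact (integrableOn_Ioc_min_one_rpow (by linarith)).union (integrableOn_Ioi_one_min_one_rpow hr)

theorem integral_Ioi_min_one_rpow (hr : r < -1) :
    ∫ u in Ioi 0, min 1 (u ^ r) = r / (r + 1) := by
  have hr₀ : r ≤ 0 := by linarith
  have hr₁ : r + 1 ≠ 0 := by linarith
  calc ∫ u in Ioi 0, min 1 (u ^ r)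
      = (∫ u in Ioc 0 1, min 1 (u ^ r)) + ∫ u in Ioi 1, min 1 (u ^ r) := by
        rw [← Ioc_union_Ioi_eq_Ioi zero_le_one,
          setIntegral_union (Ioc_disjoint_Ioi le_rfl) measurableSet_Ioi
            (integrableOn_Ioc_min_one_rpow hr₀) (integrableOn_Ioi_one_min_one_rpow hr)]
    _ = (∫ _ in Ioc (0 : ℝ) 1, (1 : ℝ)) + ∫ u in Ioi (1 : ℝ), u ^ r := by
        rw [setIntegral_congr_fun measurableSet_Ioc (eqOn_Ioc_min_one_rpow_one hr₀),
          setIntegral_congr_fun measurableSet_Ioi (eqOn_Ioi_min_one_rpow_rpow hr₀)]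
    _ = 1 + -1 / (r + 1) := by
        rw [integral_Ioi_rpow_of_lt hr one_pos, one_rpow]
        simp
    _ = r / (r + 1) := by field

end Powers

theorem second_cumulant_example_bound_general {a r T : ℝ} (ha : -1 < a) (hr : r < -1)
    (hT : 0 ≤ T) :
    IntegrableOn (fun p : ℝ × ℝ => p.1 ^ a * min 1 ((p.2 - p.1) ^ r))
        {p : ℝ × ℝ | 0 < p.1 ∧ p.1 < p.2 ∧ p.2 < T} ∧
      ∫ p in {p : ℝ × ℝ | 0 < p.1 ∧ p.1 < p.2 ∧ p.2 < T}, p.1 ^ a * min 1 ((p.2 - p.1) ^ r) ≤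
        r / (r + 1) / (a + 1) * T ^ (a + 1) := by
  have hf : IntegrableOn (fun s : ℝ => s ^ a) (Ioo 0 T) := by
    rw [← intervalIntegrable_iff_integrableOn_Ioo_of_le hT]
    exact intervalIntegral.intervalIntegrable_rpow' ha
  have hg := integrableOn_Ioi_min_one_rpow hr
  refine ⟨integrableOn_triangle_mul_comp_sub hf hg, ?_⟩
  calc ∫ p in {p : ℝ × ℝ | 0 < p.1 ∧ p.1 < p.2 ∧ p.2 < T}, p.1 ^ a * min 1 ((p.2 - p.1) ^ r)
      ≤ (∫ s in Ioo 0 T, s ^ a) * ∫ u in Ioi 0, min 1 (u ^ r) :=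
        setIntegral_triangle_mul_comp_sub_le hf hg (fun s hs => rpow_nonneg hs.1.le a)
          fun u hu => le_min zero_le_one (rpow_nonneg (mem_Ioi.1 hu).le r)
    _ = r / (r + 1) / (a + 1) * T ^ (a + 1) := by
        rw [integral_Ioo_zero_rpow ha hT, integral_Ioi_min_one_rpow hr]
        ring

/-- For `H ∈ (0,1/2)` there is `C > 0` (depending only on `H`) such that for all `T > 0`,
`∫∫_{0<s<t<T} s^{2H-1} ⬝ min(1,(t-s)^{2H-2}) dt ds ≤ C ⬝ T^{2H}`. -/
theorem second_cumulant_example_bound (H : ℝ) (hH : H ∈ Set.Ioo (0 : ℝ) (1/2)) :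
    ∃ C : ℝ, 0 < C ∧ ∀ T : ℝ, 0 < T →
      (∫ p in {p : ℝ × ℝ | 0 < p.1 ∧ p.1 < p.2 ∧ p.2 < T},
        p.1 ^ (2 * H - 1) * min 1 ((p.2 - p.1) ^ (2 * H - 2))) ≤ C * T ^ (2 * H) := by
  obtain ⟨hH₀, hH₁⟩ := hH
  refine ⟨(2 * H - 2) / (2 * H - 2 + 1) / (2 * H),
    div_pos (div_pos_of_neg_of_neg (by linarith) (by linarith)) (by linarith), fun T hT => ?_⟩
  simpa only [sub_add_cancel] using
    (second_cumulant_example_bound_general (a := 2 * H - 1) (r := 2 * H - 2)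
      (by linarith) (by linarith) hT.le).2
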